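/- For n ≥ 8, the height of Q(n) — the maximum cardinality of a chain (a subset totally ordered by ⪯_Q) in Q(n) — equals (n−2)(n−3)/2 + 1. -/

import Mathlib

open Finset

/-- Cumulative sum: `x 0 + ... + x k`. -/
def cum {n : ℕ} (x : Fin n → ℤ) (k : Fin n) : ℤ := ∑ i ∈ Finset.Iic k, x i

/-- The partial order `⪯`: every partial sum of `x` is at most that of `y`. -/
def ple {n : ℕ} (x y : Fin n → ℤ) : Prop := ∀ k : Fin n, cum x k ≤ cum y k

/-- Membership in `P(n)`: all entries are `1` or `-1`. -/
def isPM {n : ℕ} (v : Fin n → ℤ) : Prop := ∀ i, v i = 1 ∨ v i = -1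

/-- Membership in `Q(n)`. -/
def inQ {n : ℕ} (v : Fin n → ℤ) : Prop := isPM v ∧ ¬ ple v 0 ∧ ¬ ple 0 v

/-- Standard inner product on `ℤ^n`. -/
def dotp {n : ℕ} (x y : Fin n → ℤ) : ℤ := ∑ i, x i * y i

/-- The ±1 vector of a subset `S`. -/
def pS {n : ℕ} (S : Finset (Fin n)) : Fin n → ℤ := fun i => if i ∈ S then 1 else -1

/-- The vector `m_k`: first `k` entries 1, next `k+1` entries −1, rest 1 (0-indexed). -/
def mvec (n k : ℕ) : Fin n → ℤ := fun i => if i.val < k then 1 else if i.val < 2 * k + 1 then -1 else 1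

/-- An instance of the partition problem: `c_1 ≥ c_2 ≥ ⋯ ≥ c_n ≥ 0`. -/
def monoc {n : ℕ} (c : Fin n → ℤ) : Prop := (∀ i j : Fin n, i ≤ j → c j ≤ c i) ∧ ∀ i, 0 ≤ c i

/-!
The sum `cumTotal` of all partial sums is a rank function: on `±1` vectors it has constant parity,
it is strictly monotone for `⪯`, and between any two comparable `±1` vectors it can be raised in
steps of `2`. So chains between `±1` vectors `u ⪯ w` have at most
`(cumTotal w - cumTotal u) / 2 + 1` elements, and this is attained.

A `±1` vector is not above `0` exactly when some partial sum of odd length is negative, and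
`mvec n k` is the greatest `±1` vector whose first `2k + 1` entries have negative sum. Hence `Q(n)`
is the union of the intervals from `-mvec n j` to `mvec n k` over `j ≠ k` with
`2j, 2k < n`; for `n ≥ 8` the largest rank difference occurs for `j = 0` and `k = 1`.
-/

section PartialSums

variable {n : ℕ}

theorem cum_zero (k : Fin n) : cum 0 k = 0 := by
  simp [cum]

theorem cum_neg (v : Fin n → ℤ) (k : Fin n) : cum (-v) k = -cum v k := by
  simp [cum]

theorem cum_sub_cum (v : Fin n → ℤ) {i j : Fin n} (hij : i ≤ j) :
    cum v j - cum v i = ∑ k ∈ Ioc i j, v k := by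
  have hunion : Iic j = Iic i ∪ Ioc i j := by
    ext k
    simp only [mem_union, mem_Iic, mem_Ioc]
    grind
  have hdisj : Disjoint (Iic i) (Ioc i j) :=
    disjoint_left.2 fun k hk hk' => (mem_Ioc.1 hk').1.not_ge (mem_Iic.1 hk)
  rw [cum, cum, hunion, sum_union hdisj, add_sub_cancel_left]

theorem cum_of_val_eq_zero (v : Fin n → ℤ) {k : Fin n} (hk : k.val = 0) : cum v k = v k := by
  have hIic : Iic k = {k} := by
    ext j
    simp [Fin.le_def, Fin.ext_iff, hk]
  rw [cum, hIic, sum_singleton]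

theorem cum_of_val_eq_succ (v : Fin n → ℤ) {i k : Fin n} (hk : k.val = i.val + 1) :
    cum v k = cum v i + v k := by
  have hIoc : Ioc i k = {k} := by
    ext j
    simp only [mem_Ioc, mem_singleton, Fin.lt_def, Fin.le_def, Fin.ext_iff]
    omega
  rw [← sub_eq_iff_eq_add', cum_sub_cum v (Fin.le_def.2 (by omega)), hIoc, sum_singleton]

theorem cum_eq_of_zero_of_succ (v : Fin n → ℤ) (f : ℕ → ℤ)
    (hzero : ∀ k : Fin n, k.val = 0 → v k = f 0)
    (hsucc : ∀ (i : ℕ) (k : Fin n), k.val = i + 1 → v k = f (i + 1) - f i) (k : Fin n) :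
    cum v k = f k := by
  obtain ⟨k, hk⟩ := k
  induction k with
  | zero => rw [cum_of_val_eq_zero v rfl, hzero _ rfl]
  | succ i ih =>
    rw [cum_of_val_eq_succ v (i := ⟨i, by omega⟩) rfl, ih, hsucc i _ rfl, add_sub_cancel]

theorem cum_injective : Function.Injective (cum : (Fin n → ℤ) → Fin n → ℤ) := by
  intro v w h
  funext k
  rcases Nat.eq_zero_or_eq_succ_pred k.val with hk | hk
  · rw [← cum_of_val_eq_zero v hk, ← cum_of_val_eq_zero w hk, h]
  · have hv := cum_of_val_eq_succ v (i := ⟨k.val.pred, by omega⟩) hk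
    have hw := cum_of_val_eq_succ w (i := ⟨k.val.pred, by omega⟩) hk
    rw [h] at hv
    exact add_left_cancel (hv.symm.trans hw)

theorem ple.refl (v : Fin n → ℤ) : ple v v := fun _ => le_rfl

instance : Std.Refl (ple (n := n)) := ⟨ple.refl⟩

theorem ple.trans {u v w : Fin n → ℤ} (huv : ple u v) (hvw : ple v w) : ple u w :=
  fun k => (huv k).trans (hvw k)

theorem neg_ple_neg_iff {v w : Fin n → ℤ} : ple (-v) (-w) ↔ ple w v := by
  simp only [ple, cum_neg, neg_le_neg_iff]

end PartialSums

section Rank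

variable {n : ℕ}

/-- The sum of all partial sums of `v`. It increases by `2` along each covering relation of `P(n)`
and so plays the role of (twice) a rank function. -/
def cumTotal (v : Fin n → ℤ) : ℤ := ∑ k, cum v k

theorem cumTotal_neg (v : Fin n → ℤ) : cumTotal (-v) = -cumTotal v := by
  simp only [cumTotal, cum_neg, sum_neg_distrib]

theorem cumTotal_eq_sum_mul (v : Fin n → ℤ) : cumTotal v = ∑ i : Fin n, ((n : ℤ) - i) * v i :=
  calc cumTotal v = ∑ i, ∑ _k ∈ Ici i, v i := sum_comm' (by simp)
    _ = ∑ i : Fin n, ((n : ℤ) - i) * v i := by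
      refine sum_congr rfl fun i _ => ?_
      rw [sum_const, Fin.card_Ici, nsmul_eq_mul, Nat.cast_sub i.isLt.le]

theorem ple.cumTotal_le {v w : Fin n → ℤ} (h : ple v w) : cumTotal v ≤ cumTotal w :=
  sum_le_sum fun k _ => h k

theorem ple.eq_of_cumTotal_eq {v w : Fin n → ℤ} (h : ple v w) (hT : cumTotal v = cumTotal w) :
    v = w :=
  cum_injective <| funext fun k => (sum_eq_sum_iff_of_le fun k _ => h k).1 hT k (mem_univ k)

theorem cumTotal_injOn_of_isChain {A : Set (Fin n → ℤ)} (hA : IsChain ple A) :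
    A.InjOn cumTotal := by
  intro v hv w hw hT
  rcases hA.total hv hw with h | h
  · exact h.eq_of_cumTotal_eq hT
  · exact (h.eq_of_cumTotal_eq hT.symm).symm

end Rank

section SignVectors

variable {n : ℕ} {v w : Fin n → ℤ}

theorem isPM.neg (hv : isPM v) : isPM (-v) := fun i =>
  (hv i).symm.imp (fun h => by simp [h]) fun h => by simp [h]

theorem isPM.abs_sum_le_card (hv : isPM v) (s : Finset (Fin n)) : |∑ i ∈ s, v i| ≤ #s :=
  calc |∑ i ∈ s, v i| ≤ ∑ i ∈ s, |v i| := abs_sum_le_sum_abs _ _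
    _ = #s := by
      rw [sum_congr rfl fun i _ => (abs_eq zero_le_one).2 (hv i), sum_const, nsmul_one]

theorem isPM.even_sum_sub_card (hv : isPM v) (s : Finset (Fin n)) :
    Even (∑ i ∈ s, v i - #s) := by
  rw [even_iff_two_dvd, cast_card, ← sum_sub_distrib]
  refine dvd_sum fun i _ => ?_
  rcases hv i with h | h <;> norm_num [h]

theorem isPM.cum_le (hv : isPM v) (k : Fin n) : cum v k ≤ k + 1 := by
  have h := hv.abs_sum_le_card (Iic k)
  rw [Fin.card_Iic] at h
  exact_mod_cast (le_abs_self _).trans h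

theorem isPM.even_cum_sub (hv : isPM v) (k : Fin n) : Even (cum v k - (k + 1)) := by
  have h := hv.even_sum_sub_card (Iic k)
  rw [Fin.card_Iic] at h
  exact_mod_cast h

theorem isPM.even_cum_sub_cum (hv : isPM v) (hw : isPM w) (k : Fin n) :
    Even (cum w k - cum v k) := by
  simpa only [sub_sub_sub_cancel_right] using (hw.even_cum_sub k).sub (hv.even_cum_sub k)

theorem isPM.even_cumTotal_sub (hv : isPM v) (hw : isPM w) :
    Even (cumTotal w - cumTotal v) := by
  rw [cumTotal, cumTotal, ← sum_sub_distrib]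
  exact even_sum _ fun k _ => hv.even_cum_sub_cum hw k

theorem isPM.abs_cum_sub_cum_le (hv : isPM v) (i j : Fin n) :
    |cum v j - cum v i| ≤ |(j : ℤ) - i| := by
  wlog hij : i ≤ j generalizing i j
  · rw [abs_sub_comm, abs_sub_comm (j : ℤ)]
    exact this j i (le_of_not_ge hij)
  calc |cum v j - cum v i| ≤ #(Ioc i j) := cum_sub_cum v hij ▸ hv.abs_sum_le_card _
    _ = (j : ℤ) - i := by rw [Fin.card_Ioc, Nat.cast_sub (Fin.le_def.1 hij)]
    _ ≤ |(j : ℤ) - i| := le_abs_self _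

end SignVectors

section Chains

variable {n : ℕ} {u w : Fin n → ℤ}

/-- The vector with the same partial sums as `u`, except that the one ending at `i` is larger by
`2`. Within `P(n)`, passing from `u` to `raiseCum u i` is a covering relation of `⪯`. -/
def raiseCum (u : Fin n → ℤ) (i : Fin n) : Fin n → ℤ := fun k =>
  u k + (if k = i then 2 else 0) - if k.val = i.val + 1 then 2 else 0

theorem cum_raiseCum (u : Fin n → ℤ) (i k : Fin n) :
    cum (raiseCum u i) k = cum u k + if k = i then 2 else 0 := by
  obtain ⟨k, hk⟩ := k
  induction k with
  | zero => simp [cum_of_val_eq_zero, raiseCum]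
  | succ k ih =>
    rw [cum_of_val_eq_succ _ (i := ⟨k, by omega⟩) rfl, ih,
      cum_of_val_eq_succ u (i := ⟨k, by omega⟩) (k := ⟨k + 1, hk⟩) rfl]
    simp only [raiseCum, Fin.ext_iff, Nat.add_right_cancel_iff]
    ring

theorem cumTotal_raiseCum (u : Fin n → ℤ) (i : Fin n) :
    cumTotal (raiseCum u i) = cumTotal u + 2 := by
  simp [cumTotal, cum_raiseCum, sum_add_distrib]

theorem isPM_raiseCum (hu : isPM u) {i : Fin n} (hi : u i = -1)
    (hnext : ∀ k : Fin n, k.val = i.val + 1 → u k = 1) : isPM (raiseCum u i) := by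
  intro k
  by_cases hki : k = i
  · simp [raiseCum, hki, hi]
  by_cases hk : k.val = i.val + 1
  · simp [raiseCum, hki, hk, hnext k hk]
  · simpa [raiseCum, hki, hk] using hu k

theorem isPM.exists_valley_of_ple (hu : isPM u) (hw : isPM w) (h : ple u w) (hne : u ≠ w) :
    ∃ i, cum u i < cum w i ∧ u i = -1 ∧ ∀ k : Fin n, k.val = i.val + 1 → u k = 1 := by
  have hdiff : ({k | cum u k < cum w k} : Finset (Fin n)).Nonempty := by
    obtain ⟨k, hk⟩ := Function.ne_iff.1 (cum_injective.ne hne)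
    exact ⟨k, by simpa using (h k).lt_of_ne hk⟩
  -- Among the positions where the paths differ, the lowest point of the path of `u` is a valley.
  obtain ⟨i, hi, hmin⟩ := exists_min_image _ (cum u) hdiff
  simp only [mem_filter, mem_univ, true_and] at hi hmin
  refine ⟨i, hi, (hu i).resolve_left fun hui => ?_,
    fun k hk => (hu k).resolve_right fun huk => ?_⟩
  · rcases Nat.eq_zero_or_eq_succ_pred i.val with h0 | hpred
    · rw [cum_of_val_eq_zero u h0, cum_of_val_eq_zero w h0] at hi
      have := hw i
      omega
    · have hcu := cum_of_val_eq_succ u (i := ⟨i.val.pred, by omega⟩) hpred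
      have hcw := cum_of_val_eq_succ w (i := ⟨i.val.pred, by omega⟩) hpred
      have := hmin ⟨i.val.pred, by omega⟩
      have := hw i
      omega
  · have hcu := cum_of_val_eq_succ u hk
    have hcw := cum_of_val_eq_succ w hk
    have := hmin k
    have := hw k
    omega

theorem isPM.exists_raiseCum_ple (hu : isPM u) (hw : isPM w) (h : ple u w) (hne : u ≠ w) :
    ∃ i, isPM (raiseCum u i) ∧ ple (raiseCum u i) w := by
  obtain ⟨i, hlt, hdown, hup⟩ := hu.exists_valley_of_ple hw h hne
  refine ⟨i, isPM_raiseCum hu hdown hup, fun k => ?_⟩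
  rw [cum_raiseCum]
  split_ifs with hki
  · subst hki
    obtain ⟨d, hd⟩ := hu.even_cum_sub_cum hw k
    omega
  · simpa using h k

theorem ple_raiseCum (u : Fin n → ℤ) (i : Fin n) : ple u (raiseCum u i) := fun k => by
  rw [cum_raiseCum]
  split_ifs <;> simp

theorem isPM.exists_isChain_card_eq (hu : isPM u) (hw : isPM w) (h : ple u w) {t : ℕ}
    (ht : cumTotal w - cumTotal u = 2 * t) :
    ∃ A : Finset (Fin n → ℤ), (∀ v ∈ A, isPM v ∧ ple u v ∧ ple v w) ∧
      IsChain ple (A : Set (Fin n → ℤ)) ∧ #A = t + 1 := by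
  induction t generalizing u with
  | zero => exact ⟨{u}, by simpa using ⟨hu, ple.refl u, h⟩, by simp, by simp⟩
  | succ t ih =>
    have hne : u ≠ w := by
      rintro rfl
      omega
    obtain ⟨i, hx, hxw⟩ := hu.exists_raiseCum_ple hw h hne
    have hT := cumTotal_raiseCum u i
    obtain ⟨A, hA, hchain, hcard⟩ := ih hx hxw (by omega)
    have huA : ∀ v ∈ A, ple u v := fun v hv =>
      (ple_raiseCum u i).trans (hA v hv).2.1
    have hu_notMem : u ∉ A := fun hmem => by
      have := (hA u hmem).2.1.cumTotal_le
      omega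
    refine ⟨insert u A, ?_, ?_, by rw [card_insert_of_notMem hu_notMem, hcard]⟩
    · simp only [mem_insert, forall_eq_or_imp]
      exact ⟨⟨hu, ple.refl u, h⟩, fun v hv => ⟨(hA v hv).1, huA v hv, (hA v hv).2.2⟩⟩
    · rw [coe_insert]
      exact hchain.insert fun v hv _ => Or.inl (huA v hv)

theorem card_le_of_isChain {N : ℕ} {A : Finset (Fin n → ℤ)} (hPM : ∀ v ∈ A, isPM v)
    (hA : IsChain ple (A : Set (Fin n → ℤ)))
    (hN : ∀ v ∈ A, ∀ w ∈ A, ple v w → cumTotal w - cumTotal v ≤ 2 * N) : #A ≤ N + 1 := by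
  rcases A.eq_empty_or_nonempty with rfl | hne
  · simp
  obtain ⟨a, ha, hmin⟩ := A.exists_min_image cumTotal hne
  have hsub : A.image cumTotal ⊆ (range (N + 1)).image fun t : ℕ => cumTotal a + 2 * t := by
    refine image_subset_iff.2 fun v hv => mem_image.2 ?_
    have hle : cumTotal v - cumTotal a ≤ 2 * N := by
      rcases hA.total ha hv with h | h
      · exact hN a ha v hv h
      · linarith [h.cumTotal_le]
    obtain ⟨d, hd⟩ := (hPM a ha).even_cumTotal_sub (hPM v hv)
    have := hmin v hv
    exact ⟨d.toNat, mem_range.2 (by omega), by omega⟩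
  calc #A = #(A.image cumTotal) := (card_image_of_injOn (cumTotal_injOn_of_isChain hA)).symm
    _ ≤ #((range (N + 1)).image fun t : ℕ => cumTotal a + 2 * t) := card_le_card hsub
    _ ≤ N + 1 := card_image_le.trans_eq (card_range _)

end Chains

section ExtremalVectors

variable {n : ℕ} {v : Fin n → ℤ} {j k : ℕ}

theorem isPM_mvec (n k : ℕ) : isPM (mvec n k) := by
  intro i
  unfold mvec
  split_ifs <;> simp

theorem cum_mvec (k : ℕ) (i : Fin n) :
    cum (mvec n k) i = min ((i : ℤ) + 1) (|(i : ℤ) - 2 * k| - 1) := by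
  refine cum_eq_of_zero_of_succ (mvec n k) (fun i => min ((i : ℤ) + 1) (|(i : ℤ) - 2 * k| - 1))
    (fun l hl => ?_) (fun i l hl => ?_) i <;>
  · simp only [mvec, hl, abs_eq_max_neg]
    split_ifs <;> push_cast <;> omega

theorem isPM.ple_mvec_iff (hv : isPM v) (hk : 2 * k < n) :
    ple v (mvec n k) ↔ cum v ⟨2 * k, hk⟩ < 0 := by
  constructor
  · intro h
    have hval := h ⟨2 * k, hk⟩
    simp only [cum_mvec, le_min_iff] at hval
    push_cast at hval
    simp only [sub_self, abs_zero] at hval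
    omega
  · intro h i
    have hlip := (abs_le.1 (hv.abs_cum_sub_cum_le ⟨2 * k, hk⟩ i)).2
    push_cast at hlip
    rw [cum_mvec, le_min_iff]
    exact ⟨hv.cum_le i, by linarith⟩

theorem isPM.neg_mvec_ple_iff (hv : isPM v) (hj : 2 * j < n) :
    ple (-mvec n j) v ↔ 0 < cum v ⟨2 * j, hj⟩ := by
  rw [← neg_ple_neg_iff, neg_neg, hv.neg.ple_mvec_iff hj, cum_neg, neg_lt_zero]

theorem neg_mvec_ple_mvec_iff (hj : 2 * j < n) : ple (-mvec n j) (mvec n k) ↔ j ≠ k := by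
  rw [(isPM_mvec n k).neg_mvec_ple_iff hj, cum_mvec, abs_eq_max_neg]
  push_cast
  omega

theorem isPM.not_zero_ple_iff (hv : isPM v) :
    ¬ ple 0 v ↔ ∃ k, 2 * k < n ∧ ple v (mvec n k) := by
  constructor
  · intro h
    simp only [ple, not_forall, not_le, cum_zero] at h
    obtain ⟨i, hi⟩ := h
    -- Partial sums of even length are even, so a negative one is at most `-2`.
    have hlt : 2 * (i.val / 2) < n := by omega
    have hlip := (abs_le.1 (hv.abs_cum_sub_cum_le i ⟨2 * (i.val / 2), hlt⟩)).2
    obtain ⟨d, hd⟩ := hv.even_cum_sub i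
    refine ⟨i.val / 2, hlt, (hv.ple_mvec_iff hlt).2 ?_⟩
    rw [abs_eq_max_neg] at hlip
    push_cast at hlip
    omega
  · rintro ⟨k, hk, h⟩ h0
    have := h0 ⟨2 * k, hk⟩
    rw [cum_zero] at this
    exact this.not_gt ((hv.ple_mvec_iff hk).1 h)

theorem isPM.not_ple_zero_iff (hv : isPM v) :
    ¬ ple v 0 ↔ ∃ j, 2 * j < n ∧ ple (-mvec n j) v := by
  rw [← neg_ple_neg_iff, neg_zero, hv.neg.not_zero_ple_iff]
  simp only [← neg_ple_neg_iff (v := mvec n _), neg_neg]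

theorem inQ_iff_exists_mvec :
    inQ v ↔ isPM v ∧ (∃ j, 2 * j < n ∧ ple (-mvec n j) v) ∧ ∃ k, 2 * k < n ∧ ple v (mvec n k) :=
  and_congr_right fun hv => and_congr hv.not_ple_zero_iff hv.not_zero_ple_iff

end ExtremalVectors

section ExtremalRanks

variable {n : ℕ} {j k : ℕ}

theorem two_mul_sum_range_sub (c : ℤ) (m : ℕ) :
    2 * ∑ i ∈ range m, (c - i) = m * (2 * c + 1 - m) := by
  induction m with
  | zero => simp
  | succ m ih =>
    rw [sum_range_succ, mul_add, ih]
    push_cast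
    ring

theorem two_mul_cumTotal_mvec (hk : 2 * k < n) :
    2 * cumTotal (mvec n k) = n * (n + 1) - 2 * ((k + 1) * (2 * n - 3 * k)) := by
  have hsplit : cumTotal (mvec n k) =
      ∑ i ∈ range n, ((n : ℤ) - i) - 2 * ∑ i ∈ Ico k (2 * k + 1), ((n : ℤ) - i) := by
    have hIco : Ico k (2 * k + 1) = {i ∈ range n | k ≤ i ∧ i < 2 * k + 1} := by
      ext i
      simp only [mem_Ico, mem_filter, mem_range]
      omega
    rw [cumTotal_eq_sum_mul, hIco, sum_filter, mul_sum, ← sum_sub_distrib, sum_range]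
    refine sum_congr rfl fun i _ => ?_
    unfold mvec
    split_ifs <;> omega
  rw [hsplit, sum_Ico_eq_sub _ (by omega : k ≤ 2 * k + 1)]
  have hn := two_mul_sum_range_sub n n
  have h2k := two_mul_sum_range_sub n (2 * k + 1)
  have hk := two_mul_sum_range_sub n k
  push_cast at h2k
  linear_combination hn - 2 * h2k + 2 * hk

theorem cumTotal_mvec_le_one (hn : 8 ≤ n) (hk : 2 * k < n) (hk1 : 1 ≤ k) :
    cumTotal (mvec n k) ≤ cumTotal (mvec n 1) := by
  have hTk := two_mul_cumTotal_mvec hk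
  have hT1 := two_mul_cumTotal_mvec (n := n) (k := 1) (by omega)
  have hprod : (0 : ℤ) ≤ (k - 1) * (2 * n - 3 * k - 6) := mul_nonneg (by omega) (by omega)
  push_cast at hT1
  linarith

theorem cumTotal_mvec_le_zero (hk : 2 * k < n) :
    cumTotal (mvec n k) ≤ cumTotal (mvec n 0) := by
  have hTk := two_mul_cumTotal_mvec hk
  have hT0 := two_mul_cumTotal_mvec (n := n) (k := 0) (by omega)
  have hprod : (0 : ℤ) ≤ k * (2 * n - 3 * k - 3) := by
    rcases k.eq_zero_or_pos with rfl | hpos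
    · simp
    · exact mul_nonneg (by omega) (by omega)
  push_cast at hT0
  linarith

theorem cumTotal_mvec_add_le (hn : 8 ≤ n) (hj : 2 * j < n) (hk : 2 * k < n) (hjk : j ≠ k) :
    cumTotal (mvec n j) + cumTotal (mvec n k) ≤
      cumTotal (mvec n 0) + cumTotal (mvec n 1) := by
  wlog hlt : j < k generalizing j k
  · rw [add_comm]
    exact this hk hj hjk.symm (by omega)
  exact add_le_add (cumTotal_mvec_le_zero hj) (cumTotal_mvec_le_one hn hk (by omega))

theorem cumTotal_mvec_zero_add_one (hn : 3 ≤ n) :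
    cumTotal (mvec n 0) + cumTotal (mvec n 1) = 2 * ((n - 2) * (n - 3) / 2 : ℕ) := by
  have hT0 := two_mul_cumTotal_mvec (n := n) (k := 0) (by omega)
  have hT1 := two_mul_cumTotal_mvec (n := n) (k := 1) (by omega)
  obtain ⟨m, rfl⟩ := Nat.exists_eq_add_of_le' hn
  have heven : Even ((m + 3 - 2) * (m + 3 - 3)) := by
    simpa [mul_comm] using Nat.even_mul_succ_self m
  have hdiv := congrArg (Nat.cast : ℕ → ℤ) (Nat.two_mul_div_two_of_even heven)
  rw [show m + 3 - 2 = m + 1 by omega, Nat.add_sub_cancel] at hdiv ⊢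
  push_cast at hT0 hT1 hdiv ⊢
  linarith

theorem cumTotal_sub_le_of_inQ (hn : 8 ≤ n) {v w : Fin n → ℤ} (hv : inQ v) (hw : inQ w)
    (h : ple v w) :
    cumTotal w - cumTotal v ≤ cumTotal (mvec n 0) + cumTotal (mvec n 1) := by
  obtain ⟨-, ⟨j, hj, hjv⟩, -⟩ := inQ_iff_exists_mvec.1 hv
  obtain ⟨-, -, k, hk, hwk⟩ := inQ_iff_exists_mvec.1 hw
  have hjk : j ≠ k := (neg_mvec_ple_mvec_iff hj).1 ((hjv.trans h).trans hwk)
  have hTv := hjv.cumTotal_le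
  rw [cumTotal_neg] at hTv
  linarith [hwk.cumTotal_le, cumTotal_mvec_add_le hn hj hk hjk]

end ExtremalRanks

theorem stmt10 {n : ℕ} (hn : 8 ≤ n) :
    IsGreatest {k | ∃ A : Finset (Fin n → ℤ),
        (∀ v ∈ A, inQ v) ∧ IsChain ple (A : Set (Fin n → ℤ)) ∧ A.card = k}
      ((n - 2) * (n - 3) / 2 + 1) := by
  have hT := cumTotal_mvec_zero_add_one (show 3 ≤ n by omega)
  constructor
  · have hple : ple (-mvec n 0) (mvec n 1) :=
      (neg_mvec_ple_mvec_iff (by omega)).2 zero_ne_one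
    obtain ⟨A, hA, hchain, hcard⟩ := (isPM_mvec n 0).neg.exists_isChain_card_eq (isPM_mvec n 1) hple
      (by rw [cumTotal_neg, sub_neg_eq_add, add_comm, hT])
    refine ⟨A, fun v hv => ?_, hchain, hcard⟩
    obtain ⟨hPM, hlow, hhigh⟩ := hA v hv
    exact inQ_iff_exists_mvec.2 ⟨hPM, ⟨0, by omega, hlow⟩, ⟨1, by omega, hhigh⟩⟩
  · rintro _ ⟨A, hA, hchain, rfl⟩
    exact card_le_of_isChain (fun v hv => (hA v hv).1) hchain fun v hv w hw h =>
      hT ▸ cumTotal_sub_le_of_inQ hn (hA v hv) (hA w hw) h
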